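/- Fix δ ∈ (0,1/2), ε ∈ (0,1), α > 0, k > 0, and set v_out^±(r,t) = (1±δ) k² |log r|^{-1} (1 + (1±ε) α² t r^{-2}). There exist r_* > 0 and A_* > 0 such that for all (r,t) with 0 < r < r_*, t > 0, and r/√t ≥ A_* ε^{-1/2}, one has: for every h* ≥ (1-δ)k^{-2} r²|log r|(1 + (1-ε)α²tr^{-2}) and every u ∈ [0,1], ∂_t v_out^+ - G^{(v)}(v_out^+, h*, u) ≥ 0 and ∂_t v_out^- - G^{(v)}(v_out^-, h*, u) ≤ 0, where G^{(v)}(v,h,u) = v v_rr - (1/2)v_r² + r^{-1}(q-1-v)v_r + α² r^{-2} v(1-v) - 2pu v/h with α² = 2(q-1). -/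

import Mathlib

/-!
Write `ℓ = |log r|⁻¹`, `a = 2(q-1)`, `b = (1 ± ε)a`, `y = b t r⁻²` and `C = (1 ± δ)k²`, so that
the barrier is `v = C ℓ (1 + y)`. For `0 < r < 1` one has `ℓ' = ℓ² / r`, and hence

* `v_t = (C ℓ / r²) b`,
* `v_r = (C ℓ / r) P` with `P = ℓ (1 + y) - 2 y`,
* `v_rr = (C ℓ / r²) Q` with `Q = 2ℓ² - ℓ + y (2ℓ² - 5ℓ + 6)`.

In `r² / (C ℓ) · (v_t - G)` the terms of order zero in `ℓ` are
`b - a - a y + (q - 1) · 2 y = b - a = ± ε a`: the contributions linear in `y` cancel. Everything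
else carries a factor `ℓ`, including the term with `h*`, since the lower bound on `h*` gives
`r² / h* ≤ k² ℓ / (1 - δ)`. The region `r / √t ≥ ε^{-1/2}` keeps `y` bounded by `2a`, so the
remainder is at most `K ℓ` with an explicit `K`, and this is at most `ε a` as soon as
`r < exp (-M)` with `M` large. The sign of `v_t - G` is then that of `± ε a`.
-/


/-- The operator `G^{(v)}(v,h,u) = v v_rr - (1/2)v_r² + r⁻¹(q-1-v)v_r
+ 2(q-1) r⁻² v(1-v) - 2pu v/h` (with `α² = 2(q-1)`), acting on a function `v` of `r`. -/
noncomputable def Gv (p q : ℕ) (r : ℝ) (v : ℝ → ℝ) (h u : ℝ) : ℝ :=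
  v r * deriv (deriv v) r - (1 / 2) * (deriv v r) ^ 2
    + r⁻¹ * ((q : ℝ) - 1 - v r) * deriv v r
    + 2 * ((q : ℝ) - 1) * r ^ (-2 : ℤ) * v r * (1 - v r)
    - 2 * (p : ℝ) * u * v r / h

/-- The outer-region barrier `v_out^±(r,t) = (1±δ)k²|log r|⁻¹(1 + (1±ε)α²tr⁻²)`
with `α² = 2(q-1)` and sign `s = ±1`. -/
noncomputable def vOut (q : ℕ) (δ ε k s : ℝ) (r t : ℝ) : ℝ :=
  (1 + s * δ) * k ^ 2 * |Real.log r|⁻¹ *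
    (1 + (1 + s * ε) * (2 * ((q : ℝ) - 1)) * t * r ^ (-2 : ℤ))

lemma hasDerivAt_abs_log_inv {x : ℝ} (h0 : 0 < x) (h1 : x < 1) :
    HasDerivAt (fun z => |Real.log z|⁻¹) (|Real.log x|⁻¹ ^ 2 / x) x := by
  have hlog : Real.log x < 0 := Real.log_neg h0 h1
  have h := ((hasDerivAt_abs_neg hlog).comp x (Real.hasDerivAt_log h0.ne')).inv
    (abs_pos.2 hlog.ne).ne'
  refine h.congr_deriv ?_
  simp only [Function.comp_apply]
  field_simp

lemma hasDerivAt_zpow_neg_two {x : ℝ} (h0 : 0 < x) :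
    HasDerivAt (fun z : ℝ => z ^ (-2 : ℤ)) (-2 * x ^ (-2 : ℤ) / x) x := by
  refine (hasDerivAt_zpow (-2) x (Or.inl h0.ne')).congr_deriv ?_
  have : x ^ (-2 - 1 : ℤ) = x ^ (-2 : ℤ) / x := by
    rw [zpow_sub_one₀ h0.ne', div_eq_mul_inv]
  rw [this]; push_cast; ring

/-- The first derivative of `C ℓ (1 + B r⁻²)`, where `ℓ = |log r|⁻¹`. -/
lemma hasDerivAt_profile (C B : ℝ) {x : ℝ} (h0 : 0 < x) (h1 : x < 1) :
    HasDerivAt (fun z => C * |Real.log z|⁻¹ * (1 + B * z ^ (-2 : ℤ)))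
      (C * |Real.log x|⁻¹ / x *
        (|Real.log x|⁻¹ * (1 + B * x ^ (-2 : ℤ)) - 2 * (B * x ^ (-2 : ℤ)))) x := by
  have h := ((hasDerivAt_abs_log_inv h0 h1).const_mul C).mul
    (((hasDerivAt_zpow_neg_two h0).const_mul B).const_add 1)
  refine h.congr_deriv ?_
  ring

/-- The second derivative of `C ℓ (1 + B r⁻²)`, where `ℓ = |log r|⁻¹`. -/
lemma deriv_deriv_profile (C B : ℝ) {x : ℝ} (h0 : 0 < x) (h1 : x < 1) :
    deriv (deriv (fun z => C * |Real.log z|⁻¹ * (1 + B * z ^ (-2 : ℤ)))) x =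
      C * |Real.log x|⁻¹ / x ^ 2 *
        (2 * |Real.log x|⁻¹ ^ 2 - |Real.log x|⁻¹ +
          B * x ^ (-2 : ℤ) * (2 * |Real.log x|⁻¹ ^ 2 - 5 * |Real.log x|⁻¹ + 6)) := by
  have hev : deriv (fun z => C * |Real.log z|⁻¹ * (1 + B * z ^ (-2 : ℤ))) =ᶠ[nhds x]
      fun z => C * |Real.log z|⁻¹ * z⁻¹ *
        (|Real.log z|⁻¹ * (1 + B * z ^ (-2 : ℤ)) - 2 * (B * z ^ (-2 : ℤ))) := by
    filter_upwards [Ioo_mem_nhds h0 h1] with z hz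
    rw [(hasDerivAt_profile C B hz.1 hz.2).deriv, div_eq_mul_inv]
  rw [hev.deriv_eq]
  have hl := hasDerivAt_abs_log_inv h0 h1
  have hz := (hasDerivAt_zpow_neg_two h0).const_mul B
  have h := ((hl.const_mul C).mul (hasDerivAt_inv h0.ne')).mul
    ((hl.mul (hz.const_add 1)).sub (hz.const_mul 2))
  refine (h.congr_deriv ?_).deriv
  simp only [Pi.mul_apply, Pi.sub_apply]
  generalize |Real.log x|⁻¹ = l
  generalize x ^ (-2 : ℤ) = w
  field_simp
  ring

/-- The bound on the rescaled error, in terms of the scalars `l = |log r|⁻¹`, `y = b t r⁻²` and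
`H = p u r² (1 + y) / h*`. -/
lemma abs_error_le {a C k l y P Q H p : ℝ} (ha : 0 ≤ a) (hC0 : 0 ≤ C) (hC : C ≤ 2 * k ^ 2)
    (hl0 : 0 ≤ l) (hl1 : l ≤ 1) (hy0 : 0 ≤ y) (hy : y ≤ 2 * a)
    (hP : P = l * (1 + y) - 2 * y) (hQ : Q = 2 * l ^ 2 - l + y * (2 * l ^ 2 - 5 * l + 6))
    (hH0 : 0 ≤ H) (hH : H ≤ 2 * p * k ^ 2 * (1 + 2 * a) * l) :
    |l * (-(C * ((1 + y) * Q)) + C * (P ^ 2 / 2) + C * ((1 + y) * P) - a / 2 * (1 + y)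
        + a * C * (1 + y) ^ 2) + 2 * H| ≤
      (2 * k ^ 2 * ((21 + a) * (1 + 2 * a) ^ 2) + a / 2 * (1 + 2 * a)
        + 4 * p * k ^ 2 * (1 + 2 * a)) * l := by
  set Y := 1 + 2 * a with hY
  have hY1 : 1 ≤ Y := by linarith
  have h1y : 0 ≤ 1 + y := by linarith
  have h1yY : 1 + y ≤ Y := by linarith
  have hPb : |P| ≤ 3 * Y := by
    rw [hP, abs_le]
    have := mul_le_mul_of_nonneg_right hl1 h1y
    have := mul_nonneg hl0 h1y
    constructor <;> linarith
  have hQb : |Q| ≤ 13 * Y := by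
    have hl2 : l ^ 2 ≤ 1 := pow_le_one₀ hl0 hl1
    have hl20 := sq_nonneg l
    have h1 : y * (2 * l ^ 2 - 5 * l + 6) ≤ y * 8 :=
      mul_le_mul_of_nonneg_left (by linarith) hy0
    have h2 : 0 ≤ y * (2 * l ^ 2 - 5 * l + 6) := mul_nonneg hy0 (by linarith)
    rw [hQ, abs_le]
    constructor <;> linarith
  have e1 : |(1 + y) * Q| ≤ 13 * Y ^ 2 := by
    rw [abs_mul, abs_of_nonneg h1y]
    calc _ ≤ Y * (13 * Y) := mul_le_mul h1yY hQb (abs_nonneg _) (by linarith)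
      _ = _ := by ring
  have e2 : |P ^ 2 / 2| ≤ 9 / 2 * Y ^ 2 := by
    rw [abs_of_nonneg (by positivity), ← sq_abs]
    have := pow_le_pow_left₀ (abs_nonneg P) hPb 2
    linarith
  have e3 : |(1 + y) * P| ≤ 3 * Y ^ 2 := by
    rw [abs_mul, abs_of_nonneg h1y]
    calc _ ≤ Y * (3 * Y) := mul_le_mul h1yY hPb (abs_nonneg _) (by linarith)
      _ = _ := by ring
  have e4 : a * (1 + y) ^ 2 ≤ a * Y ^ 2 :=
    mul_le_mul_of_nonneg_left (pow_le_pow_left₀ h1y h1yY 2) ha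
  have e4' : 0 ≤ a * (1 + y) ^ 2 := by positivity
  have e5 : a / 2 * (1 + y) ≤ a / 2 * Y := mul_le_mul_of_nonneg_left h1yY (by linarith)
  have e5' : 0 ≤ a / 2 * (1 + y) := by positivity
  rw [abs_le] at e1 e2 e3
  have hY2 : 0 ≤ Y ^ 2 := sq_nonneg Y
  -- `S` collects the terms of the bracket proportional to `C`.
  set S := -((1 + y) * Q) + P ^ 2 / 2 + (1 + y) * P + a * (1 + y) ^ 2 with hS
  have hSb : |S| ≤ (21 + a) * Y ^ 2 := by
    rw [abs_le]; constructor <;> linarith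
  have hCS : |C * S| ≤ 2 * k ^ 2 * ((21 + a) * Y ^ 2) := by
    rw [abs_mul, abs_of_nonneg hC0]
    exact mul_le_mul hC hSb (abs_nonneg _) (by positivity)
  have hbr : |C * S - a / 2 * (1 + y)| ≤ 2 * k ^ 2 * ((21 + a) * Y ^ 2) + a / 2 * Y := by
    rw [abs_le] at hCS ⊢
    constructor <;> linarith
  have heq : l * (-(C * ((1 + y) * Q)) + C * (P ^ 2 / 2) + C * ((1 + y) * P) - a / 2 * (1 + y)
        + a * C * (1 + y) ^ 2) + 2 * H = l * (C * S - a / 2 * (1 + y)) + 2 * H := by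
    rw [hS]; ring
  rw [heq]
  calc _ ≤ |l * (C * S - a / 2 * (1 + y))| + |2 * H| := abs_add_le _ _
    _ ≤ l * (2 * k ^ 2 * ((21 + a) * Y ^ 2) + a / 2 * Y) + 2 * (2 * p * k ^ 2 * Y * l) := by
      rw [abs_mul, abs_of_nonneg hl0, abs_of_nonneg (by positivity : 0 ≤ 2 * H)]
      exact add_le_add (mul_le_mul_of_nonneg_left hbr hl0) (by linarith)
    _ = _ := by ring

/-- For both signs `s = ±1`, the residual `v_t - G` is a nonnegative multiple of `s ε a + E`
with `a = 2(q-1)` and `|E| ≤ K |log r|⁻¹`. -/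
lemma residual_eq (p q : ℕ) (hq : 2 ≤ q) {δ ε k s r t h u : ℝ}
    (hδ : δ ∈ Set.Ioo (0 : ℝ) (1 / 2)) (hε : ε ∈ Set.Ioo (0 : ℝ) 1) (hk : 0 < k)
    (hs : s = 1 ∨ s = -1) (hr0 : 0 < r) (hr1 : r < 1) (hl1 : |Real.log r|⁻¹ ≤ 1)
    (ht : 0 < t) (hx1 : t * r ^ (-2 : ℤ) ≤ 1)
    (hh : (1 - δ) * k ^ (-2 : ℤ) * r ^ 2 * |Real.log r| *
            (1 + (1 - ε) * (2 * ((q : ℝ) - 1)) * t * r ^ (-2 : ℤ)) ≤ h)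
    (hu : u ∈ Set.Icc (0 : ℝ) 1) :
    ∃ m E : ℝ, 0 ≤ m ∧
      |E| ≤ (2 * k ^ 2 * ((21 + 2 * ((q : ℝ) - 1)) * (1 + 2 * (2 * ((q : ℝ) - 1))) ^ 2)
        + 2 * ((q : ℝ) - 1) / 2 * (1 + 2 * (2 * ((q : ℝ) - 1)))
        + 4 * p * k ^ 2 * (1 + 2 * (2 * ((q : ℝ) - 1)))) * |Real.log r|⁻¹ ∧
      deriv (fun τ => vOut q δ ε k s r τ) t - Gv p q r (fun x => vOut q δ ε k s x t) h u
        = m * (s * (ε * (2 * ((q : ℝ) - 1))) + E) := by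
  obtain ⟨hδ0, hδ1⟩ := hδ
  obtain ⟨hε0, hε1⟩ := hε
  obtain ⟨hu0, hu1⟩ := hu
  have hq' : (2 : ℝ) ≤ q := by exact_mod_cast hq
  set a : ℝ := 2 * ((q : ℝ) - 1) with ha
  have ha2 : 2 ≤ a := by linarith
  have hlog : 0 < |Real.log r| := abs_pos.2 (Real.log_neg hr0 hr1).ne
  set x := t * r ^ (-2 : ℤ) with hx
  have hx0 : 0 < x := by positivity
  set C := (1 + s * δ) * k ^ 2 with hCdef
  have hC0 : 0 ≤ C := by
    rcases hs with rfl | rfl <;> exact mul_nonneg (by linarith) (by positivity)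
  have hC2 : C ≤ 2 * k ^ 2 := by
    rcases hs with rfl | rfl <;> exact mul_le_mul_of_nonneg_right (by linarith) (by positivity)
  have hb0 : 0 ≤ 1 + s * ε := by rcases hs with rfl | rfl <;> linarith
  have hb2 : 1 + s * ε ≤ 2 := by rcases hs with rfl | rfl <;> linarith
  set b := (1 + s * ε) * a with hb
  set y := b * x with hy
  have hy0 : 0 ≤ y := by positivity
  have hy2 : y ≤ 2 * a := by
    have h1 : b ≤ 2 * a := mul_le_mul_of_nonneg_right hb2 (by linarith)
    have : b * x ≤ b * 1 := mul_le_mul_of_nonneg_left hx1 (by positivity)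
    linarith
  have hfun : (fun z => vOut q δ ε k s z t) =
      fun z => C * |Real.log z|⁻¹ * (1 + (b * t) * z ^ (-2 : ℤ)) := by
    funext z; simp only [vOut, hCdef, hb, ha]
  have hyy : (b * t) * r ^ (-2 : ℤ) = y := by rw [hy, hx]; ring
  have htime : deriv (fun τ => vOut q δ ε k s r τ) t =
      C * |Real.log r|⁻¹ * (b * r ^ (-2 : ℤ)) := by
    have h1 : HasDerivAt (fun τ => C * |Real.log r|⁻¹ * (1 + b * τ * r ^ (-2 : ℤ)))
        (C * |Real.log r|⁻¹ * (b * 1 * r ^ (-2 : ℤ))) t :=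
      ((((hasDerivAt_id t).const_mul b).mul_const _).const_add 1).const_mul _
    rw [mul_one] at h1
    exact h1.deriv
  set l := |Real.log r|⁻¹ with hl
  have hl0 : 0 < l := inv_pos.2 hlog
  -- `h*` is at least `(1/2) k⁻² r² |log r|`.
  have hlow : (1 / 2) * (r ^ 2 / (k ^ 2 * l)) ≤ h := by
    refine le_trans ?_ hh
    have e1 : (1 - δ) * k ^ (-2 : ℤ) * r ^ 2 * |Real.log r| * (1 + (1 - ε) * a * t * r ^ (-2 : ℤ))
        = ((1 - δ) * (1 + (1 - ε) * a * x)) * (r ^ 2 / (k ^ 2 * l)) := by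
      have : |Real.log r| = l⁻¹ := by rw [hl, inv_inv]
      rw [this, hx, show k ^ (-2 : ℤ) = (k ^ 2)⁻¹ by rw [zpow_neg]; norm_cast]
      field_simp
    rw [e1]
    refine mul_le_mul_of_nonneg_right ?_ (by positivity)
    have h2 : 0 ≤ (1 - ε) * a * x :=
      mul_nonneg (mul_nonneg (by linarith) (by linarith)) hx0.le
    have := mul_nonneg (by linarith : 0 ≤ 1 - δ) h2
    linarith
  have hh0 : 0 < h := lt_of_lt_of_le (by positivity) hlow
  have hrh : r ^ 2 / h ≤ 2 * k ^ 2 * l := by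
    rw [div_le_iff₀ hh0]
    calc r ^ 2 = 2 * k ^ 2 * l * ((1 / 2) * (r ^ 2 / (k ^ 2 * l))) := by field_simp
      _ ≤ _ := mul_le_mul_of_nonneg_left hlow (by positivity)
  have hHb : p * u * (r ^ 2 / h) * (1 + y) ≤ 2 * p * k ^ 2 * (1 + 2 * a) * l := by
    calc p * u * (r ^ 2 / h) * (1 + y) ≤ p * 1 * (2 * k ^ 2 * l) * (1 + 2 * a) := by gcongr
      _ = _ := by ring
  refine ⟨C * l / r ^ 2, _, by positivity,
    abs_error_le (a := a) (C := C) (y := y) (H := p * u * (r ^ 2 / h) * (1 + y)) (p := p)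
      (by linarith) hC0 hC2 hl0.le hl1 hy0 hy2 rfl rfl (by positivity) hHb, ?_⟩
  rw [htime, hfun]
  unfold Gv
  rw [deriv_deriv_profile C (b * t) hr0 hr1, (hasDerivAt_profile C (b * t) hr0 hr1).deriv]
  simp only [← hl, hyy]
  rw [show r ^ (-2 : ℤ) = (r ^ 2)⁻¹ by rw [zpow_neg]; norm_cast,
    show (q : ℝ) - 1 = a / 2 by rw [ha]; ring]
  have hbs : s * (ε * a) = b - a := by rw [hb]; ring
  rw [hbs]
  clear_value b y C l x a
  field_simp
  ring

/-- Outer-region barriers (Lemma `outer_barriers`): for `δ ∈ (0,1/2)`, `ε ∈ (0,1)`,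
`k > 0` there exist `r_* > 0` and `A_* > 0` such that whenever `0 < r < r_*`,
`t > 0`, `r/√t ≥ A_* ε^{-1/2}`, for every `h* ≥ h_out⁻(r,t)` and every `u ∈ [0,1]`,
`v_out⁺` is a supersolution and `v_out⁻` a subsolution of `∂_t v = G^{(v)}(v,h*,u)`. -/
theorem outer_barriers (p q : ℕ) (hp : 1 ≤ p) (hq : 2 ≤ q)
    (δ ε k : ℝ) (hδ : δ ∈ Set.Ioo (0 : ℝ) (1 / 2)) (hε : ε ∈ Set.Ioo (0 : ℝ) 1)
    (hk : 0 < k) :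
    ∃ rstar > (0 : ℝ), ∃ Astar > (0 : ℝ), ∀ r t : ℝ,
      0 < r → r < rstar → 0 < t → Astar / Real.sqrt ε ≤ r / Real.sqrt t →
      ∀ hstar : ℝ,
        (1 - δ) * k ^ (-2 : ℤ) * r ^ 2 * |Real.log r| *
            (1 + (1 - ε) * (2 * ((q : ℝ) - 1)) * t * r ^ (-2 : ℤ)) ≤ hstar →
        ∀ u ∈ Set.Icc (0 : ℝ) 1,
          0 ≤ deriv (fun s => vOut q δ ε k 1 r s) t
              - Gv p q r (fun x => vOut q δ ε k 1 x t) hstar u ∧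
          deriv (fun s => vOut q δ ε k (-1) r s) t
              - Gv p q r (fun x => vOut q δ ε k (-1) x t) hstar u ≤ 0 := by
  have hq' : (2 : ℝ) ≤ q := by exact_mod_cast hq
  obtain ⟨hε0, hε1⟩ := id hε
  set a : ℝ := 2 * ((q : ℝ) - 1) with ha
  have ha2 : 2 ≤ a := by linarith
  set K : ℝ := 2 * k ^ 2 * ((21 + a) * (1 + 2 * a) ^ 2) + a / 2 * (1 + 2 * a)
    + 4 * p * k ^ 2 * (1 + 2 * a) with hK
  have hK0 : 0 ≤ K := by positivity
  have hεa : 0 < ε * a := by positivity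
  -- With `M = 1 + K / (ε a)`, the bound `|log r|⁻¹ ≤ M⁻¹` gives `K |log r|⁻¹ ≤ ε a`.
  set M : ℝ := 1 + K / (ε * a) with hM
  have hM1 : 1 ≤ M := by
    have : 0 ≤ K / (ε * a) := by positivity
    linarith
  refine ⟨Real.exp (-M), Real.exp_pos _, 1, one_pos, ?_⟩
  intro r t hr0 hrM ht hrt h hh u hu
  have hr1 : r < 1 := hrM.trans_le (Real.exp_le_one_iff.2 (by linarith))
  have hlogM : M ≤ |Real.log r| := by
    have : Real.log r < -M := (Real.log_lt_iff_lt_exp hr0).2 hrM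
    rw [abs_of_neg (by linarith)]
    linarith
  have hlog0 : 0 < |Real.log r| := by linarith
  have hl1 : |Real.log r|⁻¹ ≤ 1 := inv_le_one_of_one_le₀ (hM1.trans hlogM)
  have hKl : K * |Real.log r|⁻¹ ≤ ε * a := by
    rw [← div_eq_mul_inv, div_le_iff₀ hlog0]
    calc K = ε * a * (K / (ε * a)) := by field_simp
      _ ≤ ε * a * |Real.log r| := mul_le_mul_of_nonneg_left (by linarith) hεa.le
  have hx1 : t * r ^ (-2 : ℤ) ≤ 1 := by
    have h1 : √t ≤ r * √ε := by
      rwa [div_le_div_iff₀ (Real.sqrt_pos.2 hε0) (Real.sqrt_pos.2 ht), one_mul] at hrt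
    have h2 := pow_le_pow_left₀ (Real.sqrt_nonneg t) h1 2
    rw [mul_pow, Real.sq_sqrt ht.le, Real.sq_sqrt hε0.le] at h2
    rw [show r ^ (-2 : ℤ) = (r ^ 2)⁻¹ by rw [zpow_neg]; norm_cast, ← div_eq_mul_inv,
      div_le_one (by positivity)]
    have := mul_le_mul_of_nonneg_left hε1.le (sq_nonneg r)
    linarith
  constructor
  · obtain ⟨m, E, hm, hE, heq⟩ :=
      residual_eq p q hq hδ hε hk (Or.inl rfl) hr0 hr1 hl1 ht hx1 hh hu
    rw [heq]
    have := (abs_le.1 (hE.trans hKl)).1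
    exact mul_nonneg hm (by linarith)
  · obtain ⟨m, E, hm, hE, heq⟩ :=
      residual_eq p q hq hδ hε hk (Or.inr rfl) hr0 hr1 hl1 ht hx1 hh hu
    rw [heq]
    have := (abs_le.1 (hE.trans hKl)).2
    exact mul_nonpos_of_nonneg_of_nonpos hm (by linarith)
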